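/- arXiv:2601.15639 — 3 statements merged into one kernel-verified Lean document; each statement's English description precedes it below -/
import Mathlib

section
/- Let f : [0,∞) → ℝ be convex with f(1) = 0, and suppose the limit L = lim_{t→∞} f(t)/t exists in ℝ. Then for every finite set 𝒳 and all probability mass functions p, q on 𝒳 with p ≪ q, the f-divergence satisfies D_f(p‖q) ≤ f(0) + L. -/
/-!
By convexity the slope of the secant of `f` from `0` to `t` increases with `t`, and it has the same
limit `L` as `f t / t`. Hence `f t ≤ f 0 + t * L`, and averaging this bound at `t = p x / q x` with
the weights `q x` gives the claim.
-/

open scoped BigOperators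

/-- A probability mass function on a finite type: nonnegative and summing to 1. -/
def IsPMF {X : Type*} [Fintype X] (p : X → ℝ) : Prop :=
  (∀ x, 0 ≤ p x) ∧ ∑ x, p x = 1

/-- Absolute continuity `p ≪ q`: `q x = 0` implies `p x = 0`. -/
def AbsCont {X : Type*} (p q : X → ℝ) : Prop :=
  ∀ x, q x = 0 → p x = 0

/-- The f-divergence `D_f(p‖q) = ∑_{x : q(x) > 0} q(x) f(p(x)/q(x))`. -/
noncomputable def fDiv {X : Type*} [Fintype X] (f : ℝ → ℝ) (p q : X → ℝ) : ℝ :=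
  ∑ x, if 0 < q x then q x * f (p x / q x) else 0

open Filter Set Topology

section AsymptoticSlope

variable {𝕜 : Type*} [Field 𝕜] [LinearOrder 𝕜] [IsStrictOrderedRing 𝕜] [TopologicalSpace 𝕜]
  [OrderTopology 𝕜] {f : 𝕜 → 𝕜} {a t L : 𝕜}

theorem tendsto_slope_atTop_of_tendsto_div (a : 𝕜)
    (hlim : Tendsto (fun t => f t / t) atTop (𝓝 L)) : Tendsto (slope f a) atTop (𝓝 L) := by
  have hdiv (c : 𝕜) : Tendsto (fun t => c / t) atTop (𝓝 0) :=
    tendsto_const_nhds.div_atTop tendsto_id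
  have hquot : Tendsto (fun t => (f t / t - f a / t) / (1 - a / t)) atTop (𝓝 L) := by
    have hden : Tendsto (fun t => 1 - a / t) atTop (𝓝 1) := by
      simpa only [sub_zero] using (hdiv a).const_sub 1
    simpa only [sub_zero, div_one, Pi.div_def] using (hlim.sub (hdiv (f a))).div hden one_ne_zero
  refine hquot.congr' ?_
  filter_upwards [eventually_ne_atTop 0] with t ht
  rw [slope_def_field, ← sub_div, one_sub_div ht, div_div_div_cancel_right₀ ht]

theorem le_add_mul_of_convexOn_of_tendsto_slope (hconv : ConvexOn 𝕜 (Ici a) f)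
    (hlim : Tendsto (slope f a) atTop (𝓝 L)) (hat : a ≤ t) : f t ≤ f a + (t - a) * L := by
  obtain rfl | hat := hat.eq_or_lt
  · simp
  have hslope : slope f a t ≤ L := by
    refine ge_of_tendsto hlim ?_
    filter_upwards [eventually_ge_atTop t] with s hts
    exact hconv.monotoneOn_slope_gt self_mem_Ici ⟨hat.le, hat⟩
      ⟨hat.le.trans hts, hat.trans_le hts⟩ hts
  rwa [slope_def_field, div_le_iff₀' (sub_pos.2 hat), sub_le_iff_le_add'] at hslope

end AsymptoticSlope

section FDiv

variable {X : Type*} [Fintype X] {f : ℝ → ℝ} {p q : X → ℝ}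

theorem fDiv_le_of_forall_le_add_mul {c d : ℝ} (hf : ∀ t, 0 ≤ t → f t ≤ c + t * d)
    (hp : ∀ x, 0 ≤ p x) (hq : ∀ x, 0 ≤ q x) (hpq : AbsCont p q) :
    fDiv f p q ≤ (∑ x, q x) * c + (∑ x, p x) * d := by
  rw [Finset.sum_mul, Finset.sum_mul, ← Finset.sum_add_distrib]
  refine Finset.sum_le_sum fun x _ => ?_
  obtain hqx | hqx := (hq x).eq_or_lt
  · simp [← hqx, hpq x hqx.symm]
  · rw [if_pos hqx]
    calc
      q x * f (p x / q x) ≤ q x * (c + p x / q x * d) := by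
        gcongr
        exact hf _ (div_nonneg (hp x) hqx.le)
      _ = q x * c + p x * d := by field_simp

theorem fDiv_le_Dm_general {L : ℝ} (hconv : ConvexOn ℝ (Ici 0) f)
    (hlim : Tendsto (fun t => f t / t) atTop (𝓝 L))
    (hp : ∀ x, 0 ≤ p x) (hq : ∀ x, 0 ≤ q x) (hpq : AbsCont p q) :
    fDiv f p q ≤ (∑ x, q x) * f 0 + (∑ x, p x) * L := by
  refine fDiv_le_of_forall_le_add_mul (fun t ht => ?_) hp hq hpq
  simpa only [sub_zero] using le_add_mul_of_convexOn_of_tendsto_slope hconv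
    (tendsto_slope_atTop_of_tendsto_div 0 hlim) ht

end FDiv

/-- If `f` is convex on `[0,∞)` with `f 1 = 0` and `f t / t → L` as `t → ∞`,
then `D_f(p‖q) ≤ f 0 + L` for all pmfs `p ≪ q` on a finite alphabet. -/
theorem fDiv_le_Dm (f : ℝ → ℝ) (L : ℝ)
    (hconv : ConvexOn ℝ (Set.Ici 0) f) (hf1 : f 1 = 0)
    (hlim : Filter.Tendsto (fun t : ℝ => f t / t) Filter.atTop (nhds L)) :
    ∀ (𝒳 : Type) [Fintype 𝒳] (p q : 𝒳 → ℝ),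
      IsPMF p → IsPMF q → AbsCont p q → fDiv f p q ≤ f 0 + L := by
  intro 𝒳 _ p q hp hq hpq
  simpa only [hp.2, hq.2, one_mul] using fDiv_le_Dm_general hconv hlim hp.1 hq.1 hpq
end

section
/- Let (G,f) be an admissible pair and let X, Y, Z be finite sets. Let p_X be a pmf on X, let p_{Y|X} be a channel from X to Y, and let p_{Z|Y} be a channel from Y to Z, so that X → Y → Z forms a Markov chain; define the induced channel p_{Z|X}(z|x) = ∑_y p_{Y|X}(y|x) p_{Z|Y}(z|y). Then the data processing inequality I_{G,f}(p_X, p_{Y|X}) ≥ I_{G,f}(p_X, p_{Z|X}) holds. -/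
open scoped BigOperators

/-- `D_m(f) = f 0 + lim_{t→∞} f t / t`, as an extended real.  For a convex `f`
with `f 1 = 0` the limit equals the supremum of the slopes `f t / (t-1)` over `t > 1`. -/
noncomputable def Dm (f : ℝ → ℝ) : EReal :=
  (f 0 : EReal) + ⨆ t : {t : ℝ // 1 < t}, ((f t.1 / (t.1 - 1) : ℝ) : EReal)

/-- An admissible pair `(G, f)`: `f` is convex on `[0,∞)` with `f 1 = 0`, and
`G : [0, D_m(f)) → [0,∞)` is non-decreasing with `G 0 = 0`. -/
def Admissible (G f : ℝ → ℝ) : Prop :=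
  ConvexOn ℝ (Set.Ici 0) f ∧ f 1 = 0 ∧ G 0 = 0 ∧
    (∀ a b : ℝ, 0 ≤ a → a ≤ b → (b : EReal) < Dm f → G a ≤ G b) ∧
    (∀ a : ℝ, 0 ≤ a → (a : EReal) < Dm f → 0 ≤ G a)

/-- The `(G,f)`-information `I_{G,f}(p_X, p_{Y|X})`: the infimum over output pmfs
`q_Y` (with `p_{Y|X=x} ≪ q_Y` for all `x`) of `∑_x p_X x • G (D_f(p_{Y|X=x}‖q_Y))`. -/
noncomputable def Igf {X Y : Type*} [Fintype X] [Fintype Y]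
    (G f : ℝ → ℝ) (pX : X → ℝ) (W : X → Y → ℝ) : ℝ :=
  sInf {v : ℝ | ∃ qY : Y → ℝ, IsPMF qY ∧ (∀ x, AbsCont (W x) qY) ∧
    v = ∑ x, pX x * G (fDiv f (W x) qY)}

/-!
An `f`-divergence is a sum of perspectives `q · f (p / q)`, so Jensen's inequality gives the
generalized log-sum inequality `(∑ q) · f (∑ p / ∑ q) ≤ D_f(p‖q)`. Applied to the terms
`p y · V y z` and `q y · V y z` for each fixed `z`, this is the data processing inequality
for `D_f` after summing over `z`.

To pass from `D_f` to `G (D_f)`, the divergences must lie in `[0, D_m(f))`, where `G` is monotone.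
If `p ≤ T q` with `T > 1`, bounding `f` on `[0, T]` by its chord gives
`D_f(p‖q) ≤ (1 - 1 / T) · (f 0 + f T / (T - 1))`, and the second factor is at most `D_m(f)`; hence
`D_f(p‖q) < D_m(f)` unless the divergence vanishes. Finally, pushing an output pmf for `Y` through
the channel gives one for `Z` with a smaller objective.
-/

section AbsCont

variable {Y : Type*} {p q : Y → ℝ}

theorem AbsCont.mul_div_cancel (h : AbsCont p q) (y : Y) : q y * (p y / q y) = p y :=
  mul_div_cancel_of_imp' (h y)

theorem AbsCont.mul_right (h : AbsCont p q) (v : Y → ℝ) :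
    AbsCont (fun y => p y * v y) (fun y => q y * v y) := fun y hy =>
  mul_eq_zero.mpr ((mul_eq_zero.mp hy).imp_left (h y))

theorem AbsCont.sum_eq_zero [Fintype Y] (h : AbsCont p q) (hq : ∀ y, 0 ≤ q y)
    (hsum : ∑ y, q y = 0) : ∑ y, p y = 0 :=
  Finset.sum_eq_zero fun y hy =>
    h y ((Finset.sum_eq_zero_iff_of_nonneg fun y _ => hq y).mp hsum y hy)

theorem AbsCont.exists_one_lt_forall_le_mul [Finite Y] (h : AbsCont p q) (hq : ∀ y, 0 ≤ q y) :
    ∃ T : ℝ, 1 < T ∧ ∀ y, p y ≤ T * q y := by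
  obtain ⟨M, hM⟩ := Finite.exists_le fun y => p y / q y
  refine ⟨max M 2, lt_max_of_lt_right one_lt_two, fun y => ?_⟩
  calc p y = p y / q y * q y := (div_mul_cancel_of_imp (h y)).symm
    _ ≤ max M 2 * q y := mul_le_mul_of_nonneg_right (le_max_of_le_left (hM y)) (hq y)

end AbsCont

section IsPMF

variable {Y : Type*} [Fintype Y]

theorem IsPMF.nonempty {p : Y → ℝ} (hp : IsPMF p) : Nonempty Y := by
  by_contra! hY
  simpa using hp.2

theorem isPMF_uniform [Nonempty Y] : IsPMF fun _ : Y => (Fintype.card Y : ℝ)⁻¹ :=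
  ⟨fun _ => by positivity, by simp⟩

end IsPMF

section fDiv

variable {Y : Type*} [Fintype Y] {f : ℝ → ℝ} {p q : Y → ℝ}

theorem fDiv_eq_sum (hq : ∀ y, 0 ≤ q y) : fDiv f p q = ∑ y, q y * f (p y / q y) := by
  refine Finset.sum_congr rfl fun y _ => ?_
  rcases (hq y).eq_or_lt with h0 | hpos
  · simp [← h0]
  · exact if_pos hpos

theorem fDiv_mul_right (hq : ∀ y, 0 ≤ q y) {v : Y → ℝ} (hv : ∀ y, 0 ≤ v y) :
    fDiv f (fun y => p y * v y) (fun y => q y * v y) = ∑ y, q y * f (p y / q y) * v y := by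
  rw [fDiv_eq_sum fun y => mul_nonneg (hq y) (hv y)]
  refine Finset.sum_congr rfl fun y _ => ?_
  rcases eq_or_ne (v y) 0 with h0 | hne
  · simp [h0]
  · rw [mul_div_mul_right _ _ hne, mul_right_comm]

/-- The log-sum inequality is the case `f t = t * log t`. -/
theorem sum_mul_map_sum_div_sum_le_fDiv (hf : ConvexOn ℝ (Set.Ici 0) f) (hp : ∀ y, 0 ≤ p y)
    (hq : ∀ y, 0 ≤ q y) (h : AbsCont p q) :
    (∑ y, q y) * f ((∑ y, p y) / ∑ y, q y) ≤ fDiv f p q := by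
  rw [fDiv_eq_sum hq]
  rcases (Finset.sum_nonneg fun y _ => hq y : 0 ≤ ∑ y, q y).eq_or_lt with h0 | hpos
  · have hq0 : ∀ y, q y = 0 := fun y =>
      (Finset.sum_eq_zero_iff_of_nonneg fun y _ => hq y).mp h0.symm y (Finset.mem_univ y)
    simp [hq0]
  · have jensen := hf.map_centerMass_le (t := Finset.univ) (w := q) (p := fun y => p y / q y)
      (fun y _ => hq y) hpos fun y _ => div_nonneg (hp y) (hq y)
    simp only [Finset.centerMass, smul_eq_mul, h.mul_div_cancel, Function.comp_apply,
      ← div_eq_inv_mul] at jensen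
    rwa [le_div_iff₀' hpos] at jensen

theorem fDiv_nonneg (hf : ConvexOn ℝ (Set.Ici 0) f) (hf1 : f 1 = 0) (hp : IsPMF p)
    (hq : IsPMF q) (h : AbsCont p q) : 0 ≤ fDiv f p q := by
  simpa [hp.2, hq.2, hf1] using sum_mul_map_sum_div_sum_le_fDiv hf hp.1 hq.1 h

theorem convexOn_Ici_le_chord (hf : ConvexOn ℝ (Set.Ici 0) f) {t T : ℝ} (hT : 0 < T)
    (ht : 0 ≤ t) (htT : t ≤ T) : f t ≤ (1 - t / T) * f 0 + t / T * f T := by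
  have hcombo := hf.2 (Set.mem_Ici.mpr le_rfl) (Set.mem_Ici.mpr hT.le)
    (sub_nonneg.mpr ((div_le_one hT).mpr htT)) (div_nonneg ht hT.le) (sub_add_cancel 1 (t / T))
  simpa only [smul_eq_mul, mul_zero, zero_add, div_mul_cancel₀ t hT.ne'] using hcombo

theorem fDiv_le_of_forall_le_mul (hf : ConvexOn ℝ (Set.Ici 0) f) (hp : ∀ y, 0 ≤ p y)
    (hq : ∀ y, 0 ≤ q y) {T : ℝ} (hT : 0 < T) (hpq : ∀ y, p y ≤ T * q y) :
    fDiv f p q ≤ (∑ y, q y - (∑ y, p y) / T) * f 0 + (∑ y, p y) / T * f T := by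
  have hac : AbsCont p q := fun y hy => le_antisymm (by simpa [hy] using hpq y) (hp y)
  rw [fDiv_eq_sum hq]
  calc ∑ y, q y * f (p y / q y)
      ≤ ∑ y, q y * ((1 - p y / q y / T) * f 0 + p y / q y / T * f T) := by
        gcongr with y
        · exact hq y
        · exact convexOn_Ici_le_chord hf hT (div_nonneg (hp y) (hq y))
            (div_le_of_le_mul₀ (hq y) hT.le (hpq y))
    _ = ∑ y, ((q y - p y / T) * f 0 + p y / T * f T) := by
        refine Finset.sum_congr rfl fun y _ => ?_
        linear_combination (f T - f 0) / T * hac.mul_div_cancel y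
    _ = (∑ y, q y - (∑ y, p y) / T) * f 0 + (∑ y, p y) / T * f T := by
        rw [Finset.sum_add_distrib, ← Finset.sum_mul, ← Finset.sum_mul, Finset.sum_sub_distrib,
          ← Finset.sum_div]

theorem add_div_sub_one_le_Dm (f : ℝ → ℝ) {T : ℝ} (hT : 1 < T) :
    ((f 0 + f T / (T - 1) : ℝ) : EReal) ≤ Dm f := by
  rw [EReal.coe_add]
  exact add_le_add_right
    (le_iSup (fun t : {t : ℝ // 1 < t} => ((f t.1 / (t.1 - 1) : ℝ) : EReal)) ⟨T, hT⟩) _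

theorem fDiv_lt_Dm (hf : ConvexOn ℝ (Set.Ici 0) f) (hp : IsPMF p) (hq : IsPMF q)
    (h : AbsCont p q) (hpos : 0 < fDiv f p q) : (fDiv f p q : EReal) < Dm f := by
  obtain ⟨T, hT, hpq⟩ := h.exists_one_lt_forall_le_mul hq.1
  have hT0 : 0 < T := one_pos.trans hT
  have hle : fDiv f p q ≤ (1 - 1 / T) * (f 0 + f T / (T - 1)) := by
    calc fDiv f p q ≤ (1 - 1 / T) * f 0 + 1 / T * f T := by
          simpa only [hp.2, hq.2] using fDiv_le_of_forall_le_mul hf hp.1 hq.1 hT0 hpq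
      _ = (1 - 1 / T) * (f 0 + f T / (T - 1)) := by
          have : T - 1 ≠ 0 := (sub_pos.mpr hT).ne'
          field_simp
  have hfactor : 0 < 1 - 1 / T := sub_pos.mpr ((div_lt_one hT0).mpr hT)
  have hbound : 0 < f 0 + f T / (T - 1) :=
    pos_of_mul_pos_right (hpos.trans_le hle) hfactor.le
  have hlt : fDiv f p q < f 0 + f T / (T - 1) :=
    hle.trans_lt (mul_lt_of_lt_one_left hbound (sub_lt_self 1 (one_div_pos.mpr hT0)))
  exact (EReal.coe_lt_coe_iff.mpr hlt).trans_le (add_div_sub_one_le_Dm f hT)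

end fDiv

section channelOutput

variable {Y Z : Type*} [Fintype Y]

/-- The output distribution `z ↦ ∑ y, p y * V y z` of the channel `V` for the input `p`. -/
def channelOutput (p : Y → ℝ) (V : Y → Z → ℝ) (z : Z) : ℝ :=
  ∑ y, p y * V y z

variable {p q : Y → ℝ} {V : Y → Z → ℝ}

theorem AbsCont.channelOutput (h : AbsCont p q) (hq : ∀ y, 0 ≤ q y) (hV : ∀ y z, 0 ≤ V y z) :
    AbsCont (channelOutput p V) (channelOutput q V) := fun z =>
  (h.mul_right (V · z)).sum_eq_zero fun y => mul_nonneg (hq y) (hV y z)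

variable [Fintype Z]

theorem sum_channelOutput_of_sum_eq_one (p : Y → ℝ) (hV : ∀ y, ∑ z, V y z = 1) :
    ∑ z, channelOutput p V z = ∑ y, p y := by
  simp only [channelOutput]
  rw [Finset.sum_comm]
  simp only [← Finset.mul_sum, hV, mul_one]

theorem IsPMF.channelOutput (hp : IsPMF p) (hV : ∀ y, IsPMF (V y)) :
    IsPMF (channelOutput p V) :=
  ⟨fun z => Finset.sum_nonneg fun y _ => mul_nonneg (hp.1 y) ((hV y).1 z),
    (sum_channelOutput_of_sum_eq_one p fun y => (hV y).2).trans hp.2⟩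

theorem fDiv_channelOutput_le {f : ℝ → ℝ} (hf : ConvexOn ℝ (Set.Ici 0) f)
    (hp : ∀ y, 0 ≤ p y) (hq : ∀ y, 0 ≤ q y) (hV : ∀ y, IsPMF (V y)) (h : AbsCont p q) :
    fDiv f (channelOutput p V) (channelOutput q V) ≤ fDiv f p q := by
  have hpV : ∀ y z, 0 ≤ p y * V y z := fun y z => mul_nonneg (hp y) ((hV y).1 z)
  have hqV : ∀ y z, 0 ≤ q y * V y z := fun y z => mul_nonneg (hq y) ((hV y).1 z)
  have hout : ∀ z, 0 ≤ channelOutput q V z := fun z => Finset.sum_nonneg fun y _ => hqV y z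
  rw [fDiv_eq_sum hout]
  calc ∑ z, channelOutput q V z * f (channelOutput p V z / channelOutput q V z)
      ≤ ∑ z, fDiv f (fun y => p y * V y z) (fun y => q y * V y z) :=
        Finset.sum_le_sum fun z _ => sum_mul_map_sum_div_sum_le_fDiv hf (hpV · z) (hqV · z)
          (h.mul_right (V · z))
    _ = ∑ z, channelOutput (fun y => q y * f (p y / q y)) V z :=
        Finset.sum_congr rfl fun z _ => fDiv_mul_right hq fun y => (hV y).1 z
    _ = fDiv f p q := by
        rw [sum_channelOutput_of_sum_eq_one _ fun y => (hV y).2, fDiv_eq_sum hq]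

end channelOutput

section Igf

variable {X Y : Type*} [Fintype X] [Fintype Y] {G f : ℝ → ℝ} {pX : X → ℝ} {W : X → Y → ℝ}

theorem Admissible.map_le_map_fDiv (hGf : Admissible G f) {p q : Y → ℝ} (hp : IsPMF p)
    (hq : IsPMF q) (h : AbsCont p q) {d : ℝ} (hd : 0 ≤ d) (hle : d ≤ fDiv f p q) :
    G d ≤ G (fDiv f p q) := by
  obtain ⟨hf, -, -, hmono, -⟩ := hGf
  rcases (hd.trans hle).eq_or_lt with h0 | hpos
  · rw [← h0, hd.antisymm' (hle.trans h0.ge)]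
  · exact hmono d _ hd hle (fDiv_lt_Dm hf hp hq h hpos)

theorem Admissible.map_fDiv_nonneg (hGf : Admissible G f) {p q : Y → ℝ} (hp : IsPMF p)
    (hq : IsPMF q) (h : AbsCont p q) : 0 ≤ G (fDiv f p q) := by
  have hmono := hGf.map_le_map_fDiv hp hq h le_rfl (fDiv_nonneg hGf.1 hGf.2.1 hp hq h)
  rwa [hGf.2.2.1] at hmono

theorem Igf_le_sum (hGf : Admissible G f) (hpX : ∀ x, 0 ≤ pX x) (hW : ∀ x, IsPMF (W x))
    {q : Y → ℝ} (hq : IsPMF q) (hac : ∀ x, AbsCont (W x) q) :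
    Igf G f pX W ≤ ∑ x, pX x * G (fDiv f (W x) q) := by
  refine csInf_le ⟨0, ?_⟩ ⟨q, hq, hac, rfl⟩
  rintro _ ⟨r, hr, hrac, rfl⟩
  exact Finset.sum_nonneg fun x _ =>
    mul_nonneg (hpX x) (hGf.map_fDiv_nonneg (hW x) hr (hrac x))

theorem le_Igf [Nonempty Y] {c : ℝ}
    (hc : ∀ q, IsPMF q → (∀ x, AbsCont (W x) q) → c ≤ ∑ x, pX x * G (fDiv f (W x) q)) :
    c ≤ Igf G f pX W := by
  refine le_csInf ⟨_, _, isPMF_uniform, fun x y hy => ?_, rfl⟩ ?_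
  · exact absurd hy (inv_ne_zero (Nat.cast_ne_zero.mpr Fintype.card_ne_zero))
  · rintro _ ⟨q, hq, hac, rfl⟩
    exact hc q hq hac

end Igf

/-- Data processing inequality: if `X → Y → Z` is a Markov chain (i.e. `Z` is
obtained from `Y` through the channel `V`), then `I_{G,f}(X;Y) ≥ I_{G,f}(X;Z)`. -/
theorem Igf_data_processing {X Y Z : Type*} [Fintype X] [Fintype Y] [Fintype Z]
    (G f : ℝ → ℝ) (hGf : Admissible G f)
    (pX : X → ℝ) (hpX : IsPMF pX)
    (W : X → Y → ℝ) (hW : ∀ x, IsPMF (W x))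
    (V : Y → Z → ℝ) (hV : ∀ y, IsPMF (V y)) :
    Igf G f pX (fun x z => ∑ y, W x y * V y z) ≤ Igf G f pX W := by
  obtain ⟨x₀⟩ := hpX.nonempty
  have : Nonempty Y := (hW x₀).nonempty
  refine le_Igf fun q hq hac => ?_
  have hWV : ∀ x, IsPMF (channelOutput (W x) V) := fun x => (hW x).channelOutput hV
  have hqV : IsPMF (channelOutput q V) := hq.channelOutput hV
  have hacV : ∀ x, AbsCont (channelOutput (W x) V) (channelOutput q V) := fun x =>
    (hac x).channelOutput hq.1 fun y => (hV y).1
  calc Igf G f pX (fun x => channelOutput (W x) V)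
      ≤ ∑ x, pX x * G (fDiv f (channelOutput (W x) V) (channelOutput q V)) :=
        Igf_le_sum hGf hpX.1 hWV hqV hacV
    _ ≤ ∑ x, pX x * G (fDiv f (W x) q) := by
        gcongr with x
        · exact hpX.1 x
        · exact hGf.map_le_map_fDiv (hW x) hq (hac x)
            (fDiv_nonneg hGf.1 hGf.2.1 (hWV x) hqV (hacV x))
            (fDiv_channelOutput_le hGf.1 (hW x).1 hq.1 hV (hac x))
end

section
/- Let ν ∈ (0,∞], and let G : [0,ν) → [0,∞) be strictly increasing with G(0) = 0, twice differentiable with G'(x) > 0 for all x ∈ (0,ν), and with range equal to [0,∞). Then the following are equivalent: (i) for every c > 0 the function x ↦ G⁻¹(G(x) + G(c)) is concave on [0,ν); (ii) the function u(x) = 1/G'(x) is concave on (0,ν). -/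
/-!
The map `F x = G⁻¹ (G x + a)` is the time-`a` flow of the vector field `u = 1 / G'`. Hence
`F' = u ∘ F / u`, and differentiating once more gives `F'' = u ∘ F / u ^ 2 * (u' ∘ F - u')`.
Concavity of `F` therefore means that `u'` does not increase along the flow for time `a`. As `a`
ranges over the positive reals, the flow carries `x` to every point above `x`, so all these
conditions together say that `u'` is antitone.
-/

open Set Filter Topology

section Order

variable {α β : Type*} [LinearOrder α] [TopologicalSpace α] [OrderTopology α]
  [LinearOrder β] [TopologicalSpace β] [OrderTopology β] {f : α → β} {s : Set α}

lemma continuousOn_of_monotoneOn_of_ordConnected_image [DenselyOrdered β] (hf : MonotoneOn f s)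
    (hs : s.OrdConnected) (hfs : (f '' s).OrdConnected) : ContinuousOn f s := by
  have hmono : Monotone (s.imageFactorization f) := fun x y hxy => hf x.2 y.2 hxy
  exact continuousOn_iff_continuous_domRestrict.2 <| continuous_subtype_val.comp <|
    hmono.continuous_of_surjective imageFactorization_surjective

variable [DenselyOrdered α]

lemma continuousOn_image_of_leftInvOn {g : β → α} (hf : MonotoneOn f s) (hs : s.OrdConnected)
    (hfs : (f '' s).OrdConnected) (hg : LeftInvOn g f s) : ContinuousOn g (f '' s) := by
  have hmono : MonotoneOn g (f '' s) := Function.monotoneOn_of_rightInvOn_of_mapsTo hf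
    hg.rightInvOn_image (hg.mapsTo (surjOn_image f s))
  exact continuousOn_of_monotoneOn_of_ordConnected_image hmono hfs (by rwa [hg.image_image])

variable [NoMinOrder α] [NoMaxOrder α]

lemma mem_interior_iff_exists_lt_lt_of_ordConnected (hs : s.OrdConnected) {x : α} :
    x ∈ interior s ↔ ∃ a ∈ s, ∃ b ∈ s, a < x ∧ x < b := by
  rw [mem_interior_iff_mem_nhds]
  constructor
  · intro hx
    obtain ⟨l, r, ⟨hl, hr⟩, hlr⟩ := mem_nhds_iff_exists_Ioo_subset.1 hx
    obtain ⟨a, hla, hax⟩ := exists_between hl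
    obtain ⟨b, hxb, hbr⟩ := exists_between hr
    exact ⟨a, hlr ⟨hla, hax.trans hr⟩, b, hlr ⟨hl.trans hxb, hbr⟩, hax, hxb⟩
  · rintro ⟨a, ha, b, hb, hax, hxb⟩
    exact mem_of_superset (Icc_mem_nhds hax hxb) (hs.out ha hb)

lemma image_interior_eq_interior_image_of_strictMonoOn [DenselyOrdered β] [NoMinOrder β]
    [NoMaxOrder β] (hf : StrictMonoOn f s) (hs : s.OrdConnected) (hfs : (f '' s).OrdConnected) :
    f '' interior s = interior (f '' s) := by
  ext y
  simp only [mem_image (s := interior s), mem_interior_iff_exists_lt_lt_of_ordConnected hfs,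
    mem_interior_iff_exists_lt_lt_of_ordConnected hs, exists_mem_image]
  constructor
  · rintro ⟨x, ⟨a, ha, b, hb, hax, hxb⟩, rfl⟩
    have hx : x ∈ s := hs.out ha hb ⟨hax.le, hxb.le⟩
    exact ⟨a, ha, b, hb, hf ha hx hax, hf hx hb hxb⟩
  · rintro ⟨a, ha, b, hb, hay, hyb⟩
    obtain ⟨x, hx, rfl⟩ :=
      hfs.out (mem_image_of_mem f ha) (mem_image_of_mem f hb) ⟨hay.le, hyb.le⟩
    exact ⟨x, ⟨a, ha, b, hb, (hf.lt_iff_lt ha hx).1 hay, (hf.lt_iff_lt hx hb).1 hyb⟩, rfl⟩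

end Order

section Calculus

variable {f f' f'' : ℝ → ℝ} {s : Set ℝ}

lemma concaveOn_iff_antitoneOn_of_hasDerivAt (hs : Convex ℝ s) (hso : IsOpen s)
    (hf : ∀ x ∈ s, HasDerivAt f (f' x) x) : ConcaveOn ℝ s f ↔ AntitoneOn f' s := by
  have hderiv : EqOn (deriv f) f' s := fun x hx => (hf x hx).deriv
  constructor
  · intro h
    exact (h.antitoneOn_deriv fun x hx => (hf x hx).differentiableAt).congr hderiv
  · intro h
    rw [← hso.interior_eq] at h hderiv
    exact AntitoneOn.concaveOn_of_deriv hs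
      (fun x hx => (hf x hx).continuousAt.continuousWithinAt)
      (fun x hx => (hf x (interior_subset hx)).differentiableAt.differentiableWithinAt)
      (h.congr hderiv.symm)

lemma concaveOn_iff_nonpos_of_hasDerivAt2 (hs : Convex ℝ s) (hfc : ContinuousOn f s)
    (hf : ∀ x ∈ interior s, HasDerivAt f (f' x) x)
    (hf' : ∀ x ∈ interior s, HasDerivAt f' (f'' x) x) :
    ConcaveOn ℝ s f ↔ ∀ x ∈ interior s, f'' x ≤ 0 := by
  refine ⟨fun h x hx => ?_, fun h => concaveOn_of_hasDerivWithinAt2_nonpos hs hfc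
    (fun x hx => (hf x hx).hasDerivWithinAt) (fun x hx => (hf' x hx).hasDerivWithinAt) h⟩
  have hanti : AntitoneOn f' (interior s) :=
    (concaveOn_iff_antitoneOn_of_hasDerivAt hs.interior isOpen_interior hf).1
      (h.subset interior_subset hs.interior)
  rw [← (hf' x hx).hasDerivWithinAt.derivWithin (isOpen_interior.uniqueDiffWithinAt hx)]
  exact hanti.derivWithin_nonpos

lemma hasDerivAt_of_leftInvOn {g : ℝ → ℝ} {d x : ℝ} (hf : StrictMonoOn f s)
    (hs : s.OrdConnected) (hfs : (f '' s).OrdConnected) (hg : LeftInvOn g f s)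
    (hx : x ∈ interior s) (hd : HasDerivAt f d x) (hd0 : d ≠ 0) :
    HasDerivAt g d⁻¹ (f x) := by
  have hnhds : f '' s ∈ 𝓝 (f x) := by
    rw [← mem_interior_iff_mem_nhds, ← image_interior_eq_interior_image_of_strictMonoOn hf hs hfs]
    exact mem_image_of_mem f hx
  have hcont : ContinuousAt g (f x) :=
    (continuousOn_image_of_leftInvOn hf.monotoneOn hs hfs hg).continuousAt hnhds
  refine HasDerivAt.of_local_left_inverse hcont ?_ hd0 (mem_of_superset hnhds hg.rightInvOn_image)
  rwa [hg (interior_subset hx)]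

lemma hasDerivAt_comp_div_self {𝕜 : Type*} [NontriviallyNormedField 𝕜] {F u : 𝕜 → 𝕜}
    {x v w : 𝕜} (hF : HasDerivAt F (u (F x) / u x) x)
    (hu : HasDerivAt u v x) (huF : HasDerivAt u w (F x)) (hx : u x ≠ 0) :
    HasDerivAt (fun z => u (F z) / u z) (u (F x) / u x ^ 2 * (w - v)) x := by
  refine ((huF.comp x hF).fun_div hu hx).congr_deriv ?_
  simp only [Function.comp_apply]
  field_simp

end Calculus

section Ico

variable {ν : EReal}

lemma ordConnected_nonneg_and_coe_lt : {x : ℝ | 0 ≤ x ∧ (x : EReal) < ν}.OrdConnected :=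
  ⟨fun _ hx _ hy _ hz => ⟨hx.1.trans hz.1, (EReal.coe_le_coe_iff.2 hz.2).trans_lt hy.2⟩⟩

lemma interior_nonneg_and_coe_lt :
    interior {x : ℝ | 0 ≤ x ∧ (x : EReal) < ν} = {x : ℝ | 0 < x ∧ (x : EReal) < ν} := by
  have hopen : IsOpen {x : ℝ | (x : EReal) < ν} := isOpen_Iio.preimage continuous_coe_real_ereal
  rw [ofPred_and, interior_inter, hopen.interior_eq]
  exact congrArg (· ∩ _) interior_Ici

end Ico

/-- The map `x ↦ G⁻¹ (G x + a)`, that is, translation by `a` in the coordinate `G`. The inverse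
`Ginv` of `G` is a separate argument and is only meaningful on the range of `G`. -/
def shift (G Ginv : ℝ → ℝ) (a x : ℝ) : ℝ := Ginv (G x + a)

section Shift

variable {S : Set ℝ} {G Ginv u u' : ℝ → ℝ} {a x y : ℝ}

lemma shift_sub (hinv : LeftInvOn Ginv G S) (hy : y ∈ S) : shift G Ginv (G y - G x) x = y := by
  rw [shift, add_sub_cancel, hinv hy]

lemma apply_shift (hT : IsUpperSet (G '' S)) (hinv : LeftInvOn Ginv G S) (ha : 0 ≤ a)
    (hx : x ∈ S) : G (shift G Ginv a x) = G x + a :=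
  hinv.rightInvOn_image (hT (le_add_of_nonneg_right ha) (mem_image_of_mem G hx))

lemma shift_mem (hT : IsUpperSet (G '' S)) (hinv : LeftInvOn Ginv G S) (ha : 0 ≤ a)
    (hx : x ∈ S) : shift G Ginv a x ∈ S :=
  hinv.mapsTo (surjOn_image G S) (hT (le_add_of_nonneg_right ha) (mem_image_of_mem G hx))

lemma le_shift (hG : StrictMonoOn G S) (hT : IsUpperSet (G '' S)) (hinv : LeftInvOn Ginv G S)
    (ha : 0 ≤ a) (hx : x ∈ S) : x ≤ shift G Ginv a x := by
  rw [← hG.le_iff_le hx (shift_mem hT hinv ha hx), apply_shift hT hinv ha hx]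
  exact le_add_of_nonneg_right ha

lemma shift_mem_interior (hS : S.OrdConnected) (hG : StrictMonoOn G S)
    (hT : IsUpperSet (G '' S)) (hinv : LeftInvOn Ginv G S) (ha : 0 ≤ a) (hx : x ∈ interior S) :
    shift G Ginv a x ∈ interior S := by
  have himage := image_interior_eq_interior_image_of_strictMonoOn hG hS hT.ordConnected
  obtain ⟨z, hz, hGz⟩ : G x + a ∈ G '' interior S := by
    rw [himage]
    exact hT.interior (le_add_of_nonneg_right ha) (himage ▸ mem_image_of_mem G hx)
  rwa [shift, ← hGz, hinv (interior_subset hz)]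

lemma continuousOn_shift (hS : S.OrdConnected) (hG : MonotoneOn G S)
    (hT : IsUpperSet (G '' S)) (hinv : LeftInvOn Ginv G S) (ha : 0 ≤ a) :
    ContinuousOn (shift G Ginv a) S := by
  have hGcont : ContinuousOn G S :=
    continuousOn_of_monotoneOn_of_ordConnected_image hG hS hT.ordConnected
  exact (continuousOn_image_of_leftInvOn hG hS hT.ordConnected hinv).comp
    (hGcont.add continuousOn_const)
    fun x hx => hT (le_add_of_nonneg_right ha) (mem_image_of_mem G hx)

lemma hasDerivAt_shift (hS : S.OrdConnected) (hG : StrictMonoOn G S) (hT : IsUpperSet (G '' S))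
    (hinv : LeftInvOn Ginv G S) (hG' : ∀ x ∈ interior S, HasDerivAt G (u x)⁻¹ x)
    (hu : ∀ x ∈ interior S, u x ≠ 0) (ha : 0 ≤ a) (hx : x ∈ interior S) :
    HasDerivAt (shift G Ginv a) (u (shift G Ginv a x) / u x) x := by
  have hy := shift_mem_interior hS hG hT hinv ha hx
  have hGinv := hasDerivAt_of_leftInvOn hG hS hT.ordConnected hinv hy (hG' _ hy)
    (inv_ne_zero (hu _ hy))
  rw [inv_inv, apply_shift hT hinv ha (interior_subset hx)] at hGinv
  exact hGinv.comp x ((hG' x hx).add_const a)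

lemma concaveOn_shift_iff (hS : S.OrdConnected) (hG : StrictMonoOn G S)
    (hT : IsUpperSet (G '' S)) (hinv : LeftInvOn Ginv G S)
    (hG' : ∀ x ∈ interior S, HasDerivAt G (u x)⁻¹ x) (hu : ∀ x ∈ interior S, 0 < u x)
    (hu' : ∀ x ∈ interior S, HasDerivAt u (u' x) x) (ha : 0 ≤ a) :
    ConcaveOn ℝ S (shift G Ginv a) ↔ ∀ x ∈ interior S, u' (shift G Ginv a x) ≤ u' x := by
  have hmem : ∀ x ∈ interior S, shift G Ginv a x ∈ interior S := fun x hx =>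
    shift_mem_interior hS hG hT hinv ha hx
  have hderiv : ∀ x ∈ interior S, HasDerivAt (shift G Ginv a) (u (shift G Ginv a x) / u x) x :=
    fun x hx => hasDerivAt_shift hS hG hT hinv hG' (fun z hz => (hu z hz).ne') ha hx
  rw [concaveOn_iff_nonpos_of_hasDerivAt2 hS.convex
    (continuousOn_shift hS hG.monotoneOn hT hinv ha) hderiv fun x hx =>
      hasDerivAt_comp_div_self (hderiv x hx) (hu' x hx) (hu' _ (hmem x hx)) (hu x hx).ne']
  refine forall₂_congr fun x hx => ?_
  have hcoef : 0 < u (shift G Ginv a x) / u x ^ 2 :=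
    div_pos (hu _ (hmem x hx)) (pow_pos (hu x hx) 2)
  rw [← neg_nonneg, ← mul_neg, mul_nonneg_iff_of_pos_left hcoef, neg_sub, sub_nonneg]

lemma antitoneOn_interior_iff_forall_shift_le (hS : S.OrdConnected) (hG : StrictMonoOn G S)
    (hT : IsUpperSet (G '' S)) (hinv : LeftInvOn Ginv G S) :
    AntitoneOn u' (interior S) ↔
      ∀ a > 0, ∀ x ∈ interior S, u' (shift G Ginv a x) ≤ u' x := by
  refine ⟨fun h a ha x hx => h hx (shift_mem_interior hS hG hT hinv ha.le hx)
    (le_shift hG hT hinv ha.le (interior_subset hx)), fun h x hx y hy hxy => ?_⟩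
  obtain rfl | hlt := hxy.eq_or_lt
  · exact le_rfl
  have hpos : 0 < G y - G x := sub_pos.2 (hG (interior_subset hx) (interior_subset hy) hlt)
  simpa only [shift_sub hinv (interior_subset hy)] using h _ hpos x hx

end Shift

theorem concave_shift_iff_one_div_deriv_concave_general
    {S : Set ℝ} {G Ginv G' G'' : ℝ → ℝ}
    (hS : S.OrdConnected) (hG : StrictMonoOn G S) (hT : IsUpperSet (G '' S))
    (hinv : LeftInvOn Ginv G S)
    (hG' : ∀ x ∈ interior S, HasDerivAt G (G' x) x)
    (hG'' : ∀ x ∈ interior S, HasDerivAt G' (G'' x) x)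
    (hpos : ∀ x ∈ interior S, 0 < G' x) :
    (∀ a > 0, ConcaveOn ℝ S fun x => Ginv (G x + a)) ↔
      ConcaveOn ℝ (interior S) fun x => 1 / G' x := by
  have hu : ∀ x ∈ interior S, HasDerivAt (fun x => 1 / G' x) (-G'' x / G' x ^ 2) x :=
    fun x hx => by simpa only [one_div] using (hG'' x hx).fun_inv (hpos x hx).ne'
  rw [concaveOn_iff_antitoneOn_of_hasDerivAt hS.convex.interior isOpen_interior hu,
    antitoneOn_interior_iff_forall_shift_le hS hG hT hinv]
  exact forall₂_congr fun a ha => concaveOn_shift_iff hS hG hT hinv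
    (fun x hx => by simpa only [one_div, inv_inv] using hG' x hx)
    (fun x hx => one_div_pos.2 (hpos x hx)) hu (le_of_lt ha)

/-- Characterization of transforms `G` for which `x ↦ G⁻¹(G x + G c)` is concave.
Let `G : [0,ν) → [0,∞)` be strictly increasing with `G 0 = 0`, twice differentiable
with `G' > 0` on `(0,ν)`, and with range all of `[0,∞)` (with inverse `Ginv`).
Then concavity of `x ↦ G⁻¹(G x + G c)` for every `c > 0` is equivalent to
concavity of `u = 1/G'` on `(0,ν)`. -/
theorem concave_shift_iff_one_div_deriv_concave
    (ν : EReal) (hν : 0 < ν) (G Ginv G' G'' : ℝ → ℝ)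
    (hGmono : StrictMonoOn G {x : ℝ | 0 ≤ x ∧ (x : EReal) < ν})
    (hG0 : G 0 = 0)
    (hG' : ∀ x : ℝ, 0 ≤ x → (x : EReal) < ν →
      HasDerivWithinAt G (G' x) {y : ℝ | 0 ≤ y ∧ (y : EReal) < ν} x)
    (hG'' : ∀ x : ℝ, 0 ≤ x → (x : EReal) < ν →
      HasDerivWithinAt G' (G'' x) {y : ℝ | 0 ≤ y ∧ (y : EReal) < ν} x)
    (hG'pos : ∀ x : ℝ, 0 < x → (x : EReal) < ν → 0 < G' x)
    (hGrange : G '' {x : ℝ | 0 ≤ x ∧ (x : EReal) < ν} = Set.Ici 0)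
    (hGinv_left : ∀ x : ℝ, 0 ≤ x → (x : EReal) < ν → Ginv (G x) = x)
    (hGinv_right : ∀ y : ℝ, 0 ≤ y →
      G (Ginv y) = y ∧ 0 ≤ Ginv y ∧ ((Ginv y : ℝ) : EReal) < ν) :
    (∀ c : ℝ, 0 < c → (c : EReal) < ν →
        ConcaveOn ℝ {x : ℝ | 0 ≤ x ∧ (x : EReal) < ν} (fun x => Ginv (G x + G c))) ↔
      ConcaveOn ℝ {x : ℝ | 0 < x ∧ (x : EReal) < ν} (fun x => 1 / G' x) := by
  have hint := interior_nonneg_and_coe_lt (ν := ν)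
  have hS := ordConnected_nonneg_and_coe_lt (ν := ν)
  have himage : G '' {x : ℝ | 0 < x ∧ (x : EReal) < ν} = Set.Ioi 0 := by
    rw [← hint, image_interior_eq_interior_image_of_strictMonoOn hGmono hS
      (hGrange ▸ ordConnected_Ici), hGrange, interior_Ici]
  have hmain := concave_shift_iff_one_div_deriv_concave_general hS hGmono
    (hGrange ▸ isUpperSet_Ici 0) (fun x hx => hGinv_left x hx.1 hx.2)
    (fun x hx => (hG' x (interior_subset hx).1 (interior_subset hx).2).hasDerivAt
      (mem_interior_iff_mem_nhds.1 hx))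
    (fun x hx => (hG'' x (interior_subset hx).1 (interior_subset hx).2).hasDerivAt
      (mem_interior_iff_mem_nhds.1 hx))
    (fun x hx => hG'pos x (hint ▸ hx).1 (hint ▸ hx).2)
  rw [← hint, ← hmain]
  change _ ↔ ∀ a ∈ Ioi (0 : ℝ), _
  simp only [← himage, forall_mem_image, mem_ofPred_eq, and_imp]
end
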